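/- Let C_α = ∫_ℝ |x|^α (2π)^{−1/2} e^{−x²/2} dx for α ≥ 0. Then for every real δ ≥ 1, every integer j ≥ 0 and every real y, the polynomial identity P^{(j)}_{δ−1}(y) = Q^{(j)}_{δ−1}(y) holds, where P^{(j)}_{δ−1}(y) = (1/C_{δ−1+2j}) · ∏_{l=1}^{j} (2y + δ − 2 + 2l) and Q^{(j)}_{δ−1}(y) = Σ_{k=0}^{j} binom(j,k) · 2^k · y(y−1)⋯(y−k+1) / C_{δ−1+2k} (with the empty products for j = 0 resp. k = 0 equal to 1). -/

import Mathlib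

/-!
The moments satisfy `C_{α+2} = (α+1) C_α`, so multiplying the identity by `C_{δ-1+2j} / 2^j` turns
both sides into Pochhammer symbols: with `x = δ/2`, rising factorials `(·)^{(n)}` and falling
factorials `(·)_n`, it reads `(x + y)^{(j)} = ∑ₖ binom(j,k) (y)_k (x + k)^{(j-k)}`. As
`(x + k)^{(j-k)} = (x + j - 1)_{j-k}` and `(x + y)^{(j)} = (y + (x + j - 1))_j`, this is the
Chu-Vandermonde identity for falling factorials.
-/

open MeasureTheory

/-- `C_α = ∫ |x|^α (2π)^{−1/2} e^{−x²/2} dx`, the `α`-th absolute moment of a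
standard Gaussian. -/
noncomputable def gaussAbsMoment (α : ℝ) : ℝ :=
  ∫ x : ℝ, |x| ^ α * (Real.sqrt (2 * Real.pi))⁻¹ * Real.exp (-x ^ 2 / 2)

theorem descPochhammer_eval_add_eq_sum {R : Type*} [Ring R] {x y : R} (hxy : Commute x y) (n : ℕ) :
    (descPochhammer R n).eval (x + y) =
      ∑ k ∈ Finset.range (n + 1), n.choose k *
        ((descPochhammer R k).eval x * (descPochhammer R (n - k)).eval y) := by
  have smeval_eq_eval (m : ℕ) (r : R) :
      (descPochhammer ℤ m).smeval r = (descPochhammer R m).eval r := by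
    rw [Polynomial.descPochhammer_smeval_eq_ascPochhammer,
      Polynomial.ascPochhammer_smeval_eq_eval, descPochhammer_eval_eq_ascPochhammer]
  simpa only [Finset.Nat.sum_antidiagonal_eq_sum_range_succ_mk, smeval_eq_eval] using
    Ring.descPochhammer_smeval_add n hxy

theorem ascPochhammer_eval_add_eq_sum {R : Type*} [Ring R] {x y : R} (hxy : Commute x y) (n : ℕ) :
    (ascPochhammer R n).eval (x + y) =
      ∑ k ∈ Finset.range (n + 1), n.choose k *
        ((descPochhammer R k).eval y * (ascPochhammer R (n - k)).eval (x + k)) := by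
  have hcomm : Commute y (x + n - 1) :=
    (hxy.symm.add_right (Nat.commute_cast y n)).sub_right (Commute.one_right y)
  calc (ascPochhammer R n).eval (x + y)
      = (descPochhammer R n).eval (y + (x + n - 1)) := by
        rw [descPochhammer_eval_eq_ascPochhammer]
        congr 1
        abel
    _ = ∑ k ∈ Finset.range (n + 1), n.choose k *
          ((descPochhammer R k).eval y * (descPochhammer R (n - k)).eval (x + n - 1)) :=
        descPochhammer_eval_add_eq_sum hcomm n
    _ = _ := Finset.sum_congr rfl fun k hk ↦ by
        have hshift : x + n - 1 - (n - k : ℕ) + 1 = x + k := by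
          rw [Nat.cast_sub (Finset.mem_range_succ_iff.mp hk)]
          abel
        rw [descPochhammer_eval_eq_ascPochhammer R (x + n - 1), hshift]

theorem pow_mul_ascPochhammer_eval_eq_prod_Icc {R : Type*} [CommRing R] (c x : R) (n : ℕ) :
    c ^ n * (ascPochhammer R n).eval x = ∏ l ∈ Finset.Icc 1 n, c * (x + l - 1) := by
  induction n with
  | zero => simp
  | succ n ih =>
    rw [Finset.prod_Icc_succ_top n.succ_pos, ← ih, ascPochhammer_succ_eval]
    push_cast
    ring

theorem gaussAbsMoment_eq_Gamma {α : ℝ} (hα : -1 < α) :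
    gaussAbsMoment α = 2 ^ (α / 2) * Real.Gamma ((α + 1) / 2) / √Real.pi := by
  have integrand_eq (x : ℝ) :
      |x| ^ α * (√(2 * Real.pi))⁻¹ * Real.exp (-x ^ 2 / 2) =
        (√(2 * Real.pi))⁻¹ * (|x| ^ α * Real.exp (-(1 / 2) * |x| ^ (2 : ℝ))) := by
    rw [Real.rpow_two, sq_abs]
    ring_nf
  have constant_eq : (1 / 2 : ℝ) ^ (-(α + 1) / 2) = 2 ^ (α / 2) * √2 := by
    rw [one_div, Real.inv_rpow zero_le_two, ← Real.rpow_neg zero_le_two, Real.sqrt_eq_rpow,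
      ← Real.rpow_add zero_lt_two]
    ring_nf
  simp only [gaussAbsMoment, integrand_eq]
  rw [integral_const_mul,
    integral_comp_abs (f := fun x ↦ x ^ α * Real.exp (-(1 / 2) * x ^ (2 : ℝ))),
    integral_rpow_mul_exp_neg_mul_rpow two_pos hα one_half_pos, constant_eq,
    Real.sqrt_mul zero_le_two]
  field_simp

theorem gaussAbsMoment_pos {α : ℝ} (hα : -1 < α) : 0 < gaussAbsMoment α := by
  have hΓ := Real.Gamma_pos_of_pos (show 0 < (α + 1) / 2 by linarith)
  rw [gaussAbsMoment_eq_Gamma hα]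
  positivity

theorem gaussAbsMoment_add_two {α : ℝ} (hα : -1 < α) :
    gaussAbsMoment (α + 2) = (α + 1) * gaussAbsMoment α := by
  rw [gaussAbsMoment_eq_Gamma hα, gaussAbsMoment_eq_Gamma (by linarith),
    show (α + 2 + 1) / 2 = (α + 1) / 2 + 1 by ring, Real.Gamma_add_one (by linarith),
    show (α + 2) / 2 = α / 2 + 1 by ring, Real.rpow_add_one two_ne_zero]
  ring

theorem gaussAbsMoment_add_two_mul {α : ℝ} (hα : -1 < α) (m : ℕ) :
    gaussAbsMoment (α + 2 * m) =
      2 ^ m * (ascPochhammer ℝ m).eval ((α + 1) / 2) * gaussAbsMoment α := by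
  induction m with
  | zero => simp
  | succ m ih =>
    have hαm : -1 < α + 2 * m := by linarith [m.cast_nonneg (α := ℝ)]
    rw [Nat.cast_succ, show α + 2 * ((m : ℝ) + 1) = α + 2 * m + 2 by ring,
      gaussAbsMoment_add_two hαm, ih, ascPochhammer_succ_eval]
    ring

theorem one_div_gaussAbsMoment_add_two_mul {α : ℝ} (hα : -1 < α) {k j : ℕ} (hkj : k ≤ j) :
    1 / gaussAbsMoment (α + 2 * k) =
      2 ^ (j - k) * (ascPochhammer ℝ (j - k)).eval ((α + 1) / 2 + k) /
        gaussAbsMoment (α + 2 * j) := by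
  have exponent_gt (m : ℕ) : -1 < α + 2 * m := by linarith [m.cast_nonneg (α := ℝ)]
  rw [div_eq_div_iff (gaussAbsMoment_pos (exponent_gt k)).ne'
    (gaussAbsMoment_pos (exponent_gt j)).ne', one_mul]
  have shift := gaussAbsMoment_add_two_mul (exponent_gt k) (j - k)
  rwa [Nat.cast_sub hkj, show α + 2 * (k : ℝ) + 2 * (j - k) = α + 2 * j by ring,
    show (α + 2 * (k : ℝ) + 1) / 2 = (α + 1) / 2 + k by ring] at shift

theorem gaussAbsMoment_polynomial_identity_general (δ : ℝ) (hδ : 0 < δ) (j : ℕ) (y : ℝ) :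
    (1 / gaussAbsMoment (δ - 1 + 2 * (j : ℝ)))
        * ∏ l ∈ Finset.Icc 1 j, (2 * y + δ - 2 + 2 * (l : ℝ))
      = ∑ k ∈ Finset.range (j + 1),
          (Nat.choose j k : ℝ) * 2 ^ k * (∏ l ∈ Finset.range k, (y - l))
            / gaussAbsMoment (δ - 1 + 2 * (k : ℝ)) := by
  calc (1 / gaussAbsMoment (δ - 1 + 2 * (j : ℝ)))
        * ∏ l ∈ Finset.Icc 1 j, (2 * y + δ - 2 + 2 * (l : ℝ))
      = 1 / gaussAbsMoment (δ - 1 + 2 * (j : ℝ))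
          * (2 ^ j * (ascPochhammer ℝ j).eval (δ / 2 + y)) := by
        rw [pow_mul_ascPochhammer_eval_eq_prod_Icc]
        congr! 2
        ring
    _ = _ := by
        rw [ascPochhammer_eval_add_eq_sum (Commute.all _ _), Finset.mul_sum, Finset.mul_sum]
        refine Finset.sum_congr rfl fun k hk ↦ ?_
        have hkj : k ≤ j := Finset.mem_range_succ_iff.mp hk
        rw [div_eq_mul_one_div _ (gaussAbsMoment (δ - 1 + 2 * (k : ℝ))),
          one_div_gaussAbsMoment_add_two_mul (by linarith) hkj,
          ← descPochhammer_eval_eq_prod_range, ← pow_mul_pow_sub 2 hkj, sub_add_cancel]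
        ring

/-- Polynomial identity `P^{(j)}_{δ−1}(y) = Q^{(j)}_{δ−1}(y)`: for `δ ≥ 1`,
`j ∈ ℕ` and `y ∈ ℝ`,
`(1/C_{δ−1+2j}) ∏_{l=1}^{j} (2y + δ − 2 + 2l)
  = ∑_{k=0}^{j} binom(j,k) 2^k y(y−1)⋯(y−k+1) / C_{δ−1+2k}`. -/
theorem gaussAbsMoment_polynomial_identity (δ : ℝ) (hδ : 1 ≤ δ) (j : ℕ) (y : ℝ) :
    (1 / gaussAbsMoment (δ - 1 + 2 * (j : ℝ)))
        * ∏ l ∈ Finset.Icc 1 j, (2 * y + δ - 2 + 2 * (l : ℝ))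
      = ∑ k ∈ Finset.range (j + 1),
          (Nat.choose j k : ℝ) * 2 ^ k * (∏ l ∈ Finset.range k, (y - l))
            / gaussAbsMoment (δ - 1 + 2 * (k : ℝ)) :=
  gaussAbsMoment_polynomial_identity_general δ (by linarith) j y
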